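/- Let I be a homogeneous ideal of projective dimension d in k[x_0,...,x_n] whose Hilbert function satisfies h_I(m) = C(m+d+1, d+1) − C(m − deg I + d+1, d+1) for all m ≥ 1. Then there exist linearly independent linear forms u_1,...,u_{n-d-1} ∈ k[x_0,...,x_n] and a homogeneous polynomial f ∉ (u_1,...,u_{n-d-1}) such that I = (u_1,...,u_{n-d-1}, f). -/

import Mathlib

open MvPolynomial

/-- Integer-valued binomial coefficient `C(a, b)`, zero when `a < 0` or `a < b`. -/
def ichoose (a : ℤ) (b : ℕ) : ℤ := if a < 0 then 0 else (a.toNat).choose b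

/-- The Hilbert function of a (homogeneous) ideal `I ⊆ k[x₀, …, xₙ]`:
`m ↦ dim_k (k[x₀, …, xₙ]/I)_m`. -/
noncomputable def hilbF (k : Type*) [Field k] {n : ℕ}
    (I : Ideal (MvPolynomial (Fin (n+1)) k)) (m : ℕ) : ℕ :=
  Module.finrank k ((homogeneousSubmodule (Fin (n+1)) k m).map
    (Ideal.Quotient.mkₐ k I).toLinearMap)

open scoped Classical in
/-- The Hilbert polynomial of `I` (the polynomial agreeing with the Hilbert
function for all large `m`; junk value `0` if none exists). -/
noncomputable def hilbP (k : Type*) [Field k] {n : ℕ}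
    (I : Ideal (MvPolynomial (Fin (n+1)) k)) : Polynomial ℚ :=
  if h : ∃ P : Polynomial ℚ, ∀ᶠ m : ℕ in Filter.atTop,
      (hilbF k I m : ℚ) = P.eval (m : ℚ) then h.choose else 0

/-- The (algebraic) degree of a homogeneous ideal `I` of projective dimension
`d ≥ 0`: `d! · (leading coefficient of its Hilbert polynomial)`. -/
noncomputable def idealDeg (k : Type*) [Field k] {n : ℕ}
    (I : Ideal (MvPolynomial (Fin (n+1)) k)) : ℕ :=
  ⌊((hilbP k I).natDegree.factorial : ℚ) * (hilbP k I).leadingCoeff⌋₊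

/-- The projective dimension of a homogeneous ideal `I` (of dimension `≥ 0`):
the degree of its Hilbert polynomial. -/
noncomputable def idealDim (k : Type*) [Field k] {n : ℕ}
    (I : Ideal (MvPolynomial (Fin (n+1)) k)) : ℕ :=
  (hilbP k I).natDegree

/-- A homogeneous ideal: one containing all homogeneous components of its elements. -/
def IsHomogeneousIdeal {k : Type*} [Field k] {n : ℕ}
    (I : Ideal (MvPolynomial (Fin (n+1)) k)) : Prop :=
  ∀ f ∈ I, ∀ m : ℕ, homogeneousComponent m f ∈ I

/-- `I` is unmixed of projective dimension `d`: every associated prime `P` of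
`k[x₀,…,xₙ]/I` satisfies `dim k[x₀,…,xₙ]/P = d + 1` (affine Krull dimension). -/
def IsUnmixed (k : Type*) [Field k] {n : ℕ}
    (I : Ideal (MvPolynomial (Fin (n+1)) k)) (d : ℕ) : Prop :=
  ∀ P ∈ associatedPrimes (MvPolynomial (Fin (n+1)) k)
      (MvPolynomial (Fin (n+1)) k ⧸ I),
    ringKrullDim (MvPolynomial (Fin (n+1)) k ⧸ P) = ((d + 1 : ℕ) : WithBot (WithTop ℕ))

/-!
If `I` has the extremal Hilbert function, `h_I(1) ≤ d + 2` puts `n - d - 1` independent linear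
forms `u` into `I`. Modulo these, `k[x₀, …, xₙ]` becomes a polynomial ring in `d + 2` variables,
and the image `J` of `I` keeps the Hilbert function of `I`. So
`dim J_m = C(m - deg I + d + 1, d + 1)`, which is the dimension of the forms of degree
`m - deg I`: `J` vanishes below degree `deg I`, contains a nonzero form `g` of that degree, and
then `g · k[x]_{m - deg I} ⊆ J_m` is an equality for all `m`. Hence `J = (g)`, and `I` is generated
by `u` and a homogeneous lift of `g`.
-/

section LinearAlgebra

lemma finrank_map_add_finrank_inf_ker {K V W : Type*} [DivisionRing K] [AddCommGroup V] [Module K V]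
    [AddCommGroup W] [Module K W] (f : V →ₗ[K] W) (p : Submodule K V) [FiniteDimensional K p] :
    Module.finrank K (p.map f) + Module.finrank K (p ⊓ LinearMap.ker f : Submodule K V) =
      Module.finrank K p := by
  have h := LinearMap.finrank_range_add_finrank_ker (f.domRestrict p)
  rwa [LinearMap.range_domRestrict, LinearMap.ker_domRestrict,
    ← Submodule.finrank_map_subtype_eq, Submodule.map_comap_subtype] at h

lemma finrank_map_of_injective {R M N : Type*} [Ring R] [AddCommGroup M] [Module R M]
    [AddCommGroup N] [Module R N] {f : M →ₗ[R] N} (hf : Function.Injective f)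
    (p : Submodule R M) : Module.finrank R (p.map f) = Module.finrank R p :=
  (Submodule.equivMapOfInjective f hf p).finrank_eq.symm

end LinearAlgebra

section HomogeneousForms

lemma finrank_homogeneousSubmodule (σ R : Type*) [Fintype σ] [CommRing R] [Nontrivial R] (m : ℕ) :
    Module.finrank R (homogeneousSubmodule σ R m) = (Fintype.card σ).multichoose m := by
  classical
  have exponents_eq : {d : σ →₀ ℕ | d.degree = m} =
      ((Finset.univ : Finset σ).finsuppAntidiag m : Set (σ →₀ ℕ)) := by
    ext d
    simp [Finsupp.degree_eq_sum]
  have supported_eq : homogeneousSubmodule σ R m = restrictSupport R {d | d.degree = m} :=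
    homogeneousSubmodule_eq_finsupp_supported σ R m
  rw [supported_eq, Module.finrank_eq_nat_card_basis (basisRestrictSupport R _), exponents_eq,
    Nat.card_coe_set_eq, Set.ncard_coe_finset, Finset.card_finsuppAntidiag_nat_eq_multichoose,
    Finset.card_univ]

lemma finrank_homogeneousSubmodule_fin_succ (R : Type*) [CommRing R] [Nontrivial R] (n m : ℕ) :
    Module.finrank R (homogeneousSubmodule (Fin (n + 1)) R m) = (m + n).choose n := by
  rw [finrank_homogeneousSubmodule, Fintype.card_fin, Nat.multichoose_eq,
    Nat.add_right_comm, Nat.add_sub_cancel, add_comm n m, Nat.choose_symm_add]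

instance homogeneousSubmodule_finite (σ R : Type*) [Finite σ] [CommSemiring R] (m : ℕ) :
    Module.Finite R (homogeneousSubmodule σ R m) :=
  Module.Finite.iff_fg.mpr (homogeneousSubmodule_fg σ R m)

end HomogeneousForms

section GradedHom

lemma exists_mem_grading_map_eq {R A B ι : Type*} [CommSemiring R] [Semiring A] [Semiring B]
    [Algebra R A] [Algebra R B] [DecidableEq ι] [AddMonoid ι] {𝒜 : ι → Submodule R A}
    {ℬ : ι → Submodule R B} [GradedAlgebra 𝒜] [GradedAlgebra ℬ] {f : 𝒜 →ₐᵍ[R] ℬ}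
    (hf : Function.Surjective f) {i : ι} {b : B} (hb : b ∈ ℬ i) : ∃ a ∈ 𝒜 i, f a = b := by
  obtain ⟨a, rfl⟩ := hf b
  refine ⟨DirectSum.decompose 𝒜 a i, SetLike.coe_mem _, ?_⟩
  exact (f.toGradedRingHom.map_directSumDecompose ..).trans (DirectSum.decompose_of_mem_same ℬ hb)

end GradedHom

attribute [local instance] MvPolynomial.gradedAlgebra

section LinearSubstitution

variable {σ τ R : Type*}

section CommSemiring

variable [CommSemiring R]

/-- The graded algebra homomorphism `R[σ] → R[τ]` extending a linear map between the spaces of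
linear forms. -/
noncomputable def linearSubst
    (θ : homogeneousSubmodule σ R 1 →ₗ[R] homogeneousSubmodule τ R 1) :
    homogeneousSubmodule σ R →ₐᵍ[R] homogeneousSubmodule τ R where
  toAlgHom := aeval fun i => (θ ⟨X i, isHomogeneous_X R i⟩ : MvPolynomial τ R)
  map_mem {m p} hp := by
    simpa using (show p.IsHomogeneous m from hp).aeval (n := 1) _ fun i => (θ ⟨X i, _⟩).2

lemma linearSubst_X (θ : homogeneousSubmodule σ R 1 →ₗ[R] homogeneousSubmodule τ R 1) (i : σ) :
    linearSubst θ (X i) = θ ⟨X i, isHomogeneous_X R i⟩ :=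
  aeval_X _ i

lemma span_range_X_eq_top :
    Submodule.span R (Set.range fun i : σ =>
      (⟨X i, isHomogeneous_X R i⟩ : homogeneousSubmodule σ R 1)) = ⊤ := by
  apply Submodule.map_injective_of_injective (homogeneousSubmodule σ R 1).injective_subtype
  rw [Submodule.map_span, Submodule.map_top, Submodule.range_subtype, ← Set.range_comp]
  exact homogeneousSubmodule_one_eq_span_X.symm

lemma linearSubst_coe (θ : homogeneousSubmodule σ R 1 →ₗ[R] homogeneousSubmodule τ R 1)
    (l : homogeneousSubmodule σ R 1) : linearSubst θ l = θ l := by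
  have agree : (linearSubst θ).toLinearMap ∘ₗ (homogeneousSubmodule σ R 1).subtype =
      (homogeneousSubmodule τ R 1).subtype ∘ₗ θ :=
    LinearMap.ext_on_range span_range_X_eq_top fun i => linearSubst_X θ i
  exact LinearMap.congr_fun agree l

lemma linearSubst_rightInverse {θ : homogeneousSubmodule σ R 1 →ₗ[R] homogeneousSubmodule τ R 1}
    {η : homogeneousSubmodule τ R 1 →ₗ[R] homogeneousSubmodule σ R 1}
    (hθη : θ ∘ₗ η = LinearMap.id) :
    Function.RightInverse (linearSubst η) (linearSubst θ) := by
  have comp_eq_id : (linearSubst θ).toAlgHom.comp (linearSubst η).toAlgHom = AlgHom.id R _ := by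
    ext1 j
    change linearSubst θ (linearSubst η (X j)) = X j
    rw [linearSubst_X, linearSubst_coe, ← LinearMap.comp_apply, hθη, LinearMap.id_apply]
  exact fun q => DFunLike.congr_fun comp_eq_id q

end CommSemiring

section CommRing

variable [CommRing R] {θ : homogeneousSubmodule σ R 1 →ₗ[R] homogeneousSubmodule τ R 1}
  {η : homogeneousSubmodule τ R 1 →ₗ[R] homogeneousSubmodule σ R 1}

lemma linearSubst_linearSubst_sub_mem_span_ker (hθη : θ ∘ₗ η = LinearMap.id)
    (p : MvPolynomial σ R) :
    linearSubst η (linearSubst θ p) - p ∈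
      Ideal.span ((LinearMap.ker θ).map (homogeneousSubmodule σ R 1).subtype) := by
  set U := Ideal.span
    ((LinearMap.ker θ).map (homogeneousSubmodule σ R 1).subtype : Set (MvPolynomial σ R))
  have mk_comp_eq : (Ideal.Quotient.mkₐ R U).comp
      ((linearSubst η).toAlgHom.comp (linearSubst θ).toAlgHom) = Ideal.Quotient.mkₐ R U := by
    ext1 i
    let x : homogeneousSubmodule σ R 1 := ⟨X i, isHomogeneous_X R i⟩
    have sub_mem_ker : η (θ x) - x ∈ LinearMap.ker θ := by
      rw [LinearMap.mem_ker, map_sub, ← LinearMap.comp_apply θ η, hθη, LinearMap.id_apply, sub_self]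
    refine Ideal.Quotient.eq.mpr ?_
    change linearSubst η (linearSubst θ x) - x ∈ U
    rw [linearSubst_coe, linearSubst_coe]
    exact Ideal.subset_span ⟨_, sub_mem_ker, rfl⟩
  exact Ideal.Quotient.eq.mp (DFunLike.congr_fun mk_comp_eq p)

lemma ker_linearSubst (hθη : θ ∘ₗ η = LinearMap.id) :
    RingHom.ker (linearSubst θ) =
      Ideal.span ((LinearMap.ker θ).map (homogeneousSubmodule σ R 1).subtype) := by
  apply le_antisymm
  · intro p hp
    have hp : linearSubst θ p = 0 := hp
    simpa [hp] using linearSubst_linearSubst_sub_mem_span_ker hθη p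
  · rw [Ideal.span_le]
    rintro _ ⟨l, hl, rfl⟩
    have hl : θ l = 0 := hl
    change linearSubst θ l = 0
    rw [linearSubst_coe, hl, ZeroMemClass.coe_zero]

end CommRing

end LinearSubstitution

section Elimination

variable {σ τ ι k : Type*} [Fintype σ] [Fintype τ] [Fintype ι] [Field k]

lemma exists_surjective_linearMap_ker_eq_span {V W : Type*} [AddCommGroup V] [Module k V]
    [FiniteDimensional k V] [AddCommGroup W] [Module k W] [FiniteDimensional k W] {v : ι → V}
    (hv : LinearIndependent k v)
    (hcard : Fintype.card ι + Module.finrank k W = Module.finrank k V) :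
    ∃ θ : V →ₗ[k] W, Function.Surjective θ ∧ LinearMap.ker θ = Submodule.span k (Set.range v) := by
  set U := Submodule.span k (Set.range v)
  have finrank_quotient : Module.finrank k (V ⧸ U) = Module.finrank k W := by
    have := U.finrank_quotient_add_finrank
    rw [finrank_span_eq_card hv] at this
    omega
  let e : (V ⧸ U) ≃ₗ[k] W := LinearEquiv.ofFinrankEq _ _ finrank_quotient
  refine ⟨e.toLinearMap ∘ₗ U.mkQ, e.surjective.comp U.mkQ_surjective, ?_⟩
  rw [LinearEquiv.ker_comp, Submodule.ker_mkQ]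

lemma exists_surjective_gradedAlgHom_ker_eq_span {u : ι → MvPolynomial σ k}
    (hu : ∀ i, (u i).IsHomogeneous 1) (hli : LinearIndependent k u)
    (hcard : Fintype.card ι + Fintype.card τ = Fintype.card σ) :
    ∃ π : homogeneousSubmodule σ k →ₐᵍ[k] homogeneousSubmodule τ k,
      Function.Surjective π ∧ RingHom.ker π = Ideal.span (Set.range u) := by
  let v : ι → homogeneousSubmodule σ k 1 := fun i => ⟨u i, hu i⟩
  have hv : LinearIndependent k v := .of_comp (homogeneousSubmodule σ k 1).subtype hli
  obtain ⟨θ, hθ, hker⟩ := exists_surjective_linearMap_ker_eq_span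
    (W := homogeneousSubmodule τ k 1) hv (by simpa [finrank_homogeneousSubmodule] using hcard)
  obtain ⟨η, hθη⟩ := θ.exists_rightInverse_of_surjective (LinearMap.range_eq_top.mpr hθ)
  refine ⟨linearSubst θ, (linearSubst_rightInverse hθη).surjective, ?_⟩
  rw [ker_linearSubst hθη, hker, Submodule.map_span, ← Set.range_comp]
  exact Submodule.span_span_of_tower k (MvPolynomial σ k) _

end Elimination

section FormsOfDegree

variable {σ : Type*}

section CommRing

variable {R : Type*} [CommRing R]

/-- The module `I_m` of forms of degree `m` in the ideal `I`. -/
noncomputable def formsOfDegree (I : Ideal (MvPolynomial σ R)) (m : ℕ) :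
    Submodule R (MvPolynomial σ R) :=
  homogeneousSubmodule σ R m ⊓ I.restrictScalars R

lemma map_mulLeft_homogeneousSubmodule_le {J : Ideal (MvPolynomial σ R)} {g : MvPolynomial σ R}
    {D : ℕ} (hg : g ∈ formsOfDegree J D) (m : ℕ) :
    (homogeneousSubmodule σ R m).map (LinearMap.mulLeft R g) ≤ formsOfDegree J (D + m) := by
  rintro _ ⟨t, ht, rfl⟩
  exact ⟨hg.1.mul ht, J.mul_mem_right t hg.2⟩

lemma eq_span_singleton_of_forall_formsOfDegree_dvd {J : Ideal (MvPolynomial σ R)}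
    (hJ : J.IsHomogeneous (homogeneousSubmodule σ R)) {g : MvPolynomial σ R} (hg : g ∈ J)
    (hdvd : ∀ m, ∀ q ∈ formsOfDegree J m, g ∣ q) : J = Ideal.span {g} := by
  refine le_antisymm (fun p hp => ?_) ((Ideal.span_singleton_le_iff_mem J).mpr hg)
  rw [← sum_homogeneousComponent p]
  exact Ideal.sum_mem _ fun m _ => Ideal.mem_span_singleton.mpr <| hdvd m _
    ⟨homogeneousComponent_isHomogeneous m p, homogeneousComponent_mem_of_mem hJ hp m⟩

end CommRing

variable {k : Type*} [Field k]

instance formsOfDegree_finite [Finite σ] (I : Ideal (MvPolynomial σ k)) (m : ℕ) :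
    FiniteDimensional k (formsOfDegree I m) :=
  Submodule.finiteDimensional_inf_left _ _

lemma formsOfDegree_zero_eq_bot {I : Ideal (MvPolynomial σ k)} (hI : I ≠ ⊤) :
    formsOfDegree I 0 = ⊥ := by
  refine (Submodule.eq_bot_iff _).mpr fun p hp => ?_
  obtain ⟨c, rfl⟩ : ∃ c, C c = p := by
    simpa [homogeneousSubmodule_zero, Submodule.mem_one] using hp.1
  by_contra hCc
  have hc : c ≠ 0 := fun h => hCc (by rw [h, C_0])
  exact hI (Ideal.eq_top_of_isUnit_mem I hp.2 ((IsUnit.mk0 c hc).map C))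

lemma exists_eq_span_singleton_of_finrank_formsOfDegree [Finite σ] {J : Ideal (MvPolynomial σ k)}
    (hJ : J.IsHomogeneous (homogeneousSubmodule σ k)) {D : ℕ}
    (below : ∀ m < D, Module.finrank k (formsOfDegree J m) = 0)
    (above : ∀ m, Module.finrank k (formsOfDegree J (D + m)) =
      Module.finrank k (homogeneousSubmodule σ k m)) :
    ∃ g ≠ 0, g.IsHomogeneous D ∧ J = Ideal.span {g} := by
  have : Fintype σ := Fintype.ofFinite σ
  have ne_bot : formsOfDegree J D ≠ ⊥ := by
    intro h
    have := above 0
    rw [add_zero, h, finrank_bot, finrank_homogeneousSubmodule, Nat.multichoose_zero_right] at this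
    exact zero_ne_one this
  obtain ⟨g, hg, hg0⟩ := Submodule.exists_mem_ne_zero_of_ne_bot ne_bot
  have mulLeft_injective : Function.Injective (LinearMap.mulLeft k g) :=
    fun _ _ => mul_left_cancel₀ hg0
  refine ⟨g, hg0, hg.1, eq_span_singleton_of_forall_formsOfDegree_dvd hJ hg.2 fun m q hq => ?_⟩
  rcases lt_or_ge m D with hlt | hge
  · rw [Submodule.finrank_eq_zero.mp (below m hlt), Submodule.mem_bot] at hq
    exact hq ▸ dvd_zero g
  · obtain ⟨j, rfl⟩ := Nat.exists_eq_add_of_le hge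
    have map_eq := Submodule.eq_of_le_of_finrank_eq (map_mulLeft_homogeneousSubmodule_le hg j)
      ((finrank_map_of_injective mulLeft_injective _).trans (above j).symm)
    rw [← map_eq] at hq
    obtain ⟨t, -, rfl⟩ := hq
    exact ⟨t, rfl⟩

end FormsOfDegree

section HilbertFunction

variable {k : Type*} [Field k] {n : ℕ}

lemma IsHomogeneousIdeal.isHomogeneous {I : Ideal (MvPolynomial (Fin (n + 1)) k)}
    (hI : IsHomogeneousIdeal I) : I.IsHomogeneous (homogeneousSubmodule (Fin (n + 1)) k) :=
  fun m p hp => (decomposition.decompose'_apply p m).symm ▸ hI p hp m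

lemma hilbF_add_finrank_formsOfDegree (I : Ideal (MvPolynomial (Fin (n + 1)) k)) (m : ℕ) :
    hilbF k I m + Module.finrank k (formsOfDegree I m) = (m + n).choose n := by
  have ker_mk : LinearMap.ker (Ideal.Quotient.mkₐ k I).toLinearMap = I.restrictScalars k := by
    ext p
    exact Ideal.Quotient.eq_zero_iff_mem
  rw [← finrank_homogeneousSubmodule_fin_succ k, formsOfDegree, ← ker_mk]
  exact finrank_map_add_finrank_inf_ker _ _

lemma hilbF_top (m : ℕ) : hilbF k (⊤ : Ideal (MvPolynomial (Fin (n + 1)) k)) m = 0 := by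
  have := Ideal.Quotient.subsingleton_iff.mpr
    (rfl : (⊤ : Ideal (MvPolynomial (Fin (n + 1)) k)) = ⊤)
  exact Module.finrank_zero_of_subsingleton

lemma hilbF_comap {N : ℕ}
    {π : homogeneousSubmodule (Fin (n + 1)) k →ₐᵍ[k] homogeneousSubmodule (Fin (N + 1)) k}
    (hπ : Function.Surjective π) (J : Ideal (MvPolynomial (Fin (N + 1)) k)) (m : ℕ) :
    hilbF k (J.comap π) m = hilbF k J m := by
  let φ := Ideal.quotientMapₐ J π.toAlgHom (le_refl (J.comap π.toAlgHom))
  have map_forms : (homogeneousSubmodule (Fin (n + 1)) k m).map π.toLinearMap =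
      homogeneousSubmodule (Fin (N + 1)) k m :=
    le_antisymm (Submodule.map_le_iff_le_comap.mpr fun _ hp => π.map_mem hp)
      fun _ hq => exists_mem_grading_map_eq hπ hq
  have square : φ.toLinearMap ∘ₗ (Ideal.Quotient.mkₐ k (J.comap π.toAlgHom)).toLinearMap =
      (Ideal.Quotient.mkₐ k J).toLinearMap ∘ₗ π.toLinearMap := rfl
  have φ_injective : Function.Injective φ.toLinearMap := Ideal.quotientMap_injective
  rw [hilbF, hilbF, ← map_forms, ← Submodule.map_comp, ← square, Submodule.map_comp]
  exact (finrank_map_of_injective φ_injective _).symm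

lemma eventually_hilbF_eq_eval_hilbP {I : Ideal (MvPolynomial (Fin (n + 1)) k)}
    (hne : hilbP k I ≠ 0) :
    ∀ᶠ m : ℕ in Filter.atTop, (hilbF k I m : ℚ) = (hilbP k I).eval (m : ℚ) := by
  by_cases hex : ∃ P : Polynomial ℚ, ∀ᶠ m : ℕ in Filter.atTop, (hilbF k I m : ℚ) = P.eval (m : ℚ)
  · rw [hilbP, dif_pos hex]
    exact hex.choose_spec
  · exact absurd (dif_neg hex) hne

lemma frequently_hilbF_ne_zero {I : Ideal (MvPolynomial (Fin (n + 1)) k)} (hne : hilbP k I ≠ 0) :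
    ∃ᶠ m in Filter.atTop, hilbF k I m ≠ 0 := by
  intro eventually_zero
  have roots : ∀ᶠ m : ℕ in Filter.atTop, (hilbP k I).IsRoot m := by
    filter_upwards [eventually_zero, eventually_hilbF_eq_eval_hilbP hne] with m hzero heval
    rw [Polynomial.IsRoot, ← heval, not_not.mp hzero, Nat.cast_zero]
  refine hne (Polynomial.eq_zero_of_infinite_isRoot _ (Set.Infinite.mono ?_
    ((Nat.frequently_atTop_iff_infinite.mp roots.frequently).image Nat.cast_injective.injOn)))
  exact Set.image_subset_iff.mpr fun _ hm => hm

lemma ne_top_of_hilbP_ne_zero {I : Ideal (MvPolynomial (Fin (n + 1)) k)} (hne : hilbP k I ≠ 0) :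
    I ≠ ⊤ := by
  rintro rfl
  obtain ⟨m, hm⟩ := (frequently_hilbF_ne_zero hne).exists
  exact hm (hilbF_top m)

end HilbertFunction

section Binomial

lemma ichoose_natCast (a b : ℕ) : ichoose a b = a.choose b := by
  simp [ichoose]

lemma ichoose_eq_zero_of_lt {a : ℤ} {b : ℕ} (h : a < b) : ichoose a b = 0 := by
  rw [ichoose]
  split_ifs with ha
  · rfl
  · rw [Nat.choose_eq_zero_of_lt (by omega), Nat.cast_zero]

lemma ichoose_nonneg (a : ℤ) (b : ℕ) : 0 ≤ ichoose a b := by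
  rw [ichoose]
  split_ifs <;> positivity

end Binomial

/-- `h_I(m) = C(m + d + 1, d + 1) - C(m - D + d + 1, d + 1)` for `m ≥ 1`: the values at `m ≥ 1` of
the Hilbert function of a hypersurface of degree `D` in `ℙ^(d+1)`. -/
def HasExtremalHilbertFunction {k : Type*} [Field k] {n : ℕ}
    (I : Ideal (MvPolynomial (Fin (n + 1)) k)) (d D : ℕ) : Prop :=
  ∀ m : ℕ, 1 ≤ m →
    (hilbF k I m : ℤ) = ichoose ((m : ℤ) + d + 1) (d + 1) - ichoose ((m : ℤ) - D + d + 1) (d + 1)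

namespace HasExtremalHilbertFunction

variable {k : Type*} [Field k] {n d D : ℕ}

lemma hilbF_eq {I : Ideal (MvPolynomial (Fin (n + 1)) k)} (h : HasExtremalHilbertFunction I d D)
    {m : ℕ} (hm : 1 ≤ m) :
    (hilbF k I m : ℤ) =
      (m + (d + 1)).choose (d + 1) - ichoose ((m : ℤ) - D + d + 1) (d + 1) := by
  rw [h m hm, ← ichoose_natCast]
  push_cast
  rw [add_assoc]

lemma pos {I : Ideal (MvPolynomial (Fin (n + 1)) k)} (h : HasExtremalHilbertFunction I d D)
    (hne : hilbP k I ≠ 0) : 0 < D := by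
  refine Nat.pos_of_ne_zero fun hD => ?_
  obtain ⟨m, hm, hm1⟩ :=
    ((frequently_hilbF_ne_zero hne).and_eventually (Filter.eventually_ge_atTop 1)).exists
  have hilbF_eq_zero := h m hm1
  rw [hD, Nat.cast_zero, sub_zero, sub_self] at hilbF_eq_zero
  exact hm (Nat.cast_eq_zero.mp hilbF_eq_zero)

lemma exists_linearIndependent_linearForms {I : Ideal (MvPolynomial (Fin (n + 1)) k)}
    (h : HasExtremalHilbertFunction I d D) :
    ∃ u : Fin (n - (d + 1)) → MvPolynomial (Fin (n + 1)) k,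
      (∀ i, (u i).IsHomogeneous 1) ∧ LinearIndependent k u ∧ ∀ i, u i ∈ I := by
  have le_finrank : n - (d + 1) ≤ Module.finrank k (formsOfDegree I 1) := by
    have hsum := hilbF_add_finrank_formsOfDegree I 1
    have hone := h.hilbF_eq le_rfl
    have hnonneg := ichoose_nonneg (((1 : ℕ) : ℤ) - D + d + 1) (d + 1)
    rw [add_comm 1 n, Nat.choose_succ_self_right] at hsum
    rw [add_comm 1 (d + 1), Nat.choose_succ_self_right] at hone
    omega
  obtain ⟨w, hw⟩ := exists_linearIndependent_of_le_finrank le_finrank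
  exact ⟨fun i => w i, fun i => (w i).2.1,
    hw.map' (formsOfDegree I 1).subtype (Submodule.ker_subtype _), fun i => (w i).2.2⟩

lemma finrank_formsOfDegree {J : Ideal (MvPolynomial (Fin (d + 1 + 1)) k)}
    (h : HasExtremalHilbertFunction J d D) (hJ : J ≠ ⊤) (hD : 0 < D) (m : ℕ) :
    (Module.finrank k (formsOfDegree J m) : ℤ) = ichoose ((m : ℤ) - D + d + 1) (d + 1) := by
  rcases m.eq_zero_or_pos with rfl | hm
  · rw [formsOfDegree_zero_eq_bot hJ, finrank_bot, ichoose_eq_zero_of_lt (by push_cast; omega),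
      Nat.cast_zero]
  · have hsum := hilbF_add_finrank_formsOfDegree J m
    have heq := h.hilbF_eq hm
    omega

lemma exists_eq_span_singleton {J : Ideal (MvPolynomial (Fin (d + 1 + 1)) k)}
    (h : HasExtremalHilbertFunction J d D)
    (hhom : J.IsHomogeneous (homogeneousSubmodule (Fin (d + 1 + 1)) k)) (hJ : J ≠ ⊤)
    (hD : 0 < D) : ∃ g ≠ 0, g.IsHomogeneous D ∧ J = Ideal.span {g} := by
  refine exists_eq_span_singleton_of_finrank_formsOfDegree hhom (fun m hm => ?_) fun m => ?_
  · zify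
    rw [h.finrank_formsOfDegree hJ hD, ichoose_eq_zero_of_lt (by push_cast; omega)]
  · zify
    rw [h.finrank_formsOfDegree hJ hD, finrank_homogeneousSubmodule_fin_succ, ← ichoose_natCast]
    congr 1
    push_cast
    ring

end HasExtremalHilbertFunction

/-- characterization of the ideals attaining the lower bound for the
Hilbert function: they are generated by `n − d − 1` linearly independent linear
forms together with one further homogeneous polynomial. -/
theorem hilbert_function_extremal_characterization {k : Type*} [Field k] {n d : ℕ}
    (hd : d + 1 ≤ n) (I : Ideal (MvPolynomial (Fin (n+1)) k))
    (hhom : IsHomogeneousIdeal I) (hne : hilbP k I ≠ 0) (hdim : idealDim k I = d)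
    (heq : ∀ m : ℕ, 1 ≤ m →
      (hilbF k I m : ℤ) = ichoose ((m : ℤ) + d + 1) (d + 1)
        - ichoose ((m : ℤ) - idealDeg k I + d + 1) (d + 1)) :
    ∃ u : Fin (n - (d + 1)) → MvPolynomial (Fin (n+1)) k,
      (∀ i, (u i).IsHomogeneous 1) ∧ LinearIndependent k u ∧
      ∃ f, f ∉ Ideal.span (Set.range u) ∧ (∃ e, f.IsHomogeneous e) ∧
        I = Ideal.span (insert f (Set.range u)) := by
  have hext : HasExtremalHilbertFunction I d (idealDeg k I) := heq
  obtain ⟨u, hu, hli, huI⟩ := hext.exists_linearIndependent_linearForms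
  obtain ⟨π, hπ, hker⟩ := exists_surjective_gradedAlgHom_ker_eq_span (τ := Fin (d + 1 + 1)) hu hli
    (by simp only [Fintype.card_fin]; omega)
  have ker_le : RingHom.ker π ≤ I :=
    hker ▸ Ideal.span_le.mpr (Set.range_subset_iff.mpr huI)
  have comap_map : (I.map π).comap π = I := by
    rw [Ideal.comap_map_of_surjective' π hπ, sup_eq_left.mpr ker_le]
  have map_ne_top : I.map π ≠ ⊤ := fun h =>
    ne_top_of_hilbP_ne_zero hne (by rw [← comap_map, h, Ideal.comap_top])
  have map_ext : HasExtremalHilbertFunction (I.map π) d (idealDeg k I) := fun m hm => by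
    rw [← hilbF_comap hπ, comap_map, heq m hm]
  have map_hom := (HomogeneousIdeal.map π.toGradedRingHom ⟨I, hhom.isHomogeneous⟩).isHomogeneous
  obtain ⟨g, hg0, hg, map_eq⟩ :=
    map_ext.exists_eq_span_singleton map_hom map_ne_top (hext.pos hne)
  obtain ⟨f, hf, rfl⟩ := exists_mem_grading_map_eq hπ hg
  refine ⟨u, hu, hli, f, fun hfu => hg0 ?_, ⟨_, hf⟩, ?_⟩
  · exact RingHom.mem_ker.mp (hker ▸ hfu)
  · rw [← comap_map, map_eq, ← Set.image_singleton, ← Ideal.map_span,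
      Ideal.comap_map_of_surjective' π hπ, hker, ← Ideal.span_union, Set.singleton_union]
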